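/- There exists a constant c ≥ 1 such that for every n-vertex undirected graph G with nonnegative, polynomially bounded edge weights, every ε ∈ (0,1), and all integers k, D ≥ 1, there exists a (β,ε)-hopset H for G with β ≤ (c·k/ε)^k · D and |H| ≤ c·(n·log n / D)^{1+1/(2^{k+1}−1)}. -/

import Mathlib

/-!
The hopset is a Thorup–Zwick hierarchy built over a hitting set.

Fix a simple shortest walk for each pair at finite distance. A greedy choice gives a set `S` of
`O(n log n / D)` vertices meeting every `D` consecutive vertices of each of these walks
(`exists_path_hitting`), so that on such a walk consecutive vertices of `S` are at most `D` hops
apart. If `n log n < D`, the empty hopset suffices, as simple walks have fewer than `n` edges.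

Over `A 0 = S` take levels `A 0, A 1, …, A (k + 1) = ∅`. The edges of level `i` join `v ∈ A i` to
its bunch, the points of `A i` strictly closer to `v` than `A (i + 1)`, and to its closest point
of `A (i + 1)`. Adding a uniformly random point to `A (i + 1)` lowers a bunch of size `b` by
`b² / (2m)` on average, where `m = |A i|`, so `t` greedily chosen points leave bunches of total
size at most `2m² / (t + 1)` (`exists_sparse`); no randomness is needed. With
`K = 2 ^ (k + 1) - 1` and level sizes `M ^ (1 - (2 ^ i - 1) / K) / 2 ^ i`, the `i`-th level costs
`O(2 ^ (-i) M ^ (1 + 1 / K))` edges, and the total has a constant independent of `k`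
(`exists_levels`).

For the hopbound, put `δ = ε / (8k)`. By induction on `i` (`level_analysis`), two points of `S` on
a fixed shortest walk, at distance `L` along it, either are joined by few hops with stretch
`1 + 8iδ`, or both reach `A (i + 1)` by few hops within distance `2L`. For the step, cut the walk
into `O(1/δ)` pieces of length at most `δL`. If all pieces succeed, concatenate. Otherwise the left
end of the first failing piece and the right end of the last one reach points `z, z'` of
`A (i + 1)` within `2δL`: either `z z'` is an edge of the hopset, which costs an additive `8δL`, or
both have nearby pivots in `A (i + 2)`. At `i = k` the second alternative is void. The hop count
grows by a factor `O(k/ε)` per level, starting from `D`.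
-/

open scoped ENNReal

namespace Hopsets

/-- A weighted directed graph on vertex type `V`: a finite edge set together
with a weight function. -/
structure WDigraph (V : Type) where
  edges : Finset (V × V)
  w : V × V → ℝ

variable {V : Type}

/-- All edge weights are nonnegative. -/
def WDigraph.Nonneg (G : WDigraph V) : Prop := ∀ e, 0 ≤ G.w e

/-- Edge weights are polynomially bounded (degree `q`) in the number of vertices. -/
def WDigraph.PolyBounded [Fintype V] (G : WDigraph V) (q : ℕ) : Prop :=
  ∀ e ∈ G.edges, G.w e ≤ (Fintype.card V : ℝ) ^ q

/-- `G` encodes an undirected graph: edges come in symmetric pairs of equal weight. -/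
def WDigraph.Symmetric (G : WDigraph V) : Prop :=
  ∀ e ∈ G.edges, (e.2, e.1) ∈ G.edges ∧ G.w (e.2, e.1) = G.w e

/-- `G` is unweighted: every edge has weight `1`. -/
def WDigraph.Unweighted (G : WDigraph V) : Prop := ∀ e, G.w e = 1

/-- `IsWalkFrom G u v l` : the list of edges `l` forms a walk from `u` to `v` in `G`. -/
def IsWalkFrom (G : WDigraph V) : V → V → List (V × V) → Prop
  | u, v, [] => u = v
  | u, v, e :: l => e ∈ G.edges ∧ e.1 = u ∧ IsWalkFrom G e.2 v l

/-- The total weight of a walk, as an extended nonnegative real. -/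
noncomputable def walkWeight (G : WDigraph V) (l : List (V × V)) : ℝ≥0∞ :=
  ENNReal.ofReal ((l.map G.w).sum)

/-- `β`-hop-bounded distance: the infimum weight of a `u`-`v` walk with at most `β` edges. -/
noncomputable def WDigraph.hopDist (G : WDigraph V) (β : ℕ) (u v : V) : ℝ≥0∞ :=
  ⨅ l ∈ {l : List (V × V) | IsWalkFrom G u v l ∧ l.length ≤ β}, walkWeight G l

/-- Distance: infimum weight of a `u`-`v` walk (`∞` if there is none). -/
noncomputable def WDigraph.dist (G : WDigraph V) (u v : V) : ℝ≥0∞ :=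
  ⨅ l ∈ {l : List (V × V) | IsWalkFrom G u v l}, walkWeight G l

/-- `v` is reachable from `u` in `G`. -/
def WDigraph.Reachable (G : WDigraph V) (u v : V) : Prop :=
  ∃ l, IsWalkFrom G u v l

/-- The graph `G ∪ H` obtained by adding the edge set `H`, each added edge `(x,y)`
weighted by `dist_G(x,y)`. -/
noncomputable def WDigraph.augment [DecidableEq V] (G : WDigraph V) (H : Finset (V × V)) :
    WDigraph V where
  edges := G.edges ∪ H
  w := fun e => if e ∈ H then (G.dist e.1 e.2).toReal else G.w e

/-- `H` is a `(β,ε)`-hopset for `G`: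
`dist_G(u,v) ≤ dist^{(β)}_{G∪H}(u,v) ≤ (1+ε)·dist_G(u,v)` for all `u, v`. -/
def IsHopset [DecidableEq V] (G : WDigraph V) (β : ℕ) (ε : ℝ) (H : Finset (V × V)) : Prop :=
  ∀ u v, G.dist u v ≤ (G.augment H).hopDist β u v ∧
    (G.augment H).hopDist β u v ≤ ENNReal.ofReal (1 + ε) * G.dist u v

/-- The subgraph of `G` with edge set `E'` (same weights). -/
def WDigraph.sub (G : WDigraph V) (E' : Finset (V × V)) : WDigraph V :=
  ⟨E', G.w⟩

/-- `E'` (a subgraph of `G`) is an `r`-missing `t`-spanner: for every reachable pair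
`(u,v)` there is a `u`-`v` walk in `G` of weight at most `t·dist_G(u,v)` with at most
`r` edges outside `E'`. -/
def IsMissingSpanner [DecidableEq V] (G : WDigraph V) (E' : Finset (V × V))
    (r : ℕ) (t : ℝ) : Prop :=
  ∀ u v, G.Reachable u v → ∃ l, IsWalkFrom G u v l ∧
    walkWeight G l ≤ ENNReal.ofReal t * G.dist u v ∧
    (l.filter (fun e => decide (e ∉ E'))).length ≤ r

end Hopsets

namespace Hopsets

/-! ### Walks and shortest paths -/

/-- Total real weight of a list of edges. -/
noncomputable def wsum (G : WDigraph V) (l : List (V × V)) : ℝ := (l.map G.w).sum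

lemma wsum_nil (G : WDigraph V) : wsum G [] = 0 := by simp [wsum]

lemma wsum_cons (G : WDigraph V) (e : V × V) (l : List (V × V)) :
    wsum G (e :: l) = G.w e + wsum G l := by simp [wsum]

lemma wsum_append (G : WDigraph V) (l l' : List (V × V)) :
    wsum G (l ++ l') = wsum G l + wsum G l' := by simp [wsum]

lemma wsum_nonneg {G : WDigraph V} (hG : G.Nonneg) (l : List (V × V)) : 0 ≤ wsum G l := by
  induction l with
  | nil => simp [wsum_nil]
  | cons e l ih => rw [wsum_cons]; linarith [hG e]

lemma IsWalkFrom.append {G : WDigraph V} {u v x : V} {l l' : List (V × V)}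
    (h : IsWalkFrom G u v l) (h' : IsWalkFrom G v x l') : IsWalkFrom G u x (l ++ l') := by
  induction l generalizing u with
  | nil => simp only [IsWalkFrom] at h; subst h; simpa using h'
  | cons e l ih => exact ⟨h.1, h.2.1, ih h.2.2⟩

lemma IsWalkFrom.reverse {G : WDigraph V} (hG : G.Symmetric) {u v : V} {l : List (V × V)}
    (h : IsWalkFrom G u v l) :
    ∃ l', IsWalkFrom G v u l' ∧ l'.length = l.length ∧ wsum G l' = wsum G l := by
  induction l generalizing u with
  | nil => simp only [IsWalkFrom] at h; subst h; exact ⟨[], rfl, rfl, rfl⟩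
  | cons e l ih =>
    obtain ⟨he, heu, hl⟩ := h
    obtain ⟨l', h1, h2, h3⟩ := ih hl
    obtain ⟨he', hw⟩ := hG e he
    refine ⟨l' ++ [(e.2, e.1)], h1.append ⟨he', rfl, heu⟩, by simp [h2], ?_⟩
    rw [wsum_append, wsum_cons, wsum_cons, wsum_nil, h3, hw]; ring

lemma dist_le_of_walk {G : WDigraph V} {u v : V} {l : List (V × V)}
    (h : IsWalkFrom G u v l) : G.dist u v ≤ ENNReal.ofReal (wsum G l) :=
  iInf₂_le (f := fun (l : List (V × V)) (_ : l ∈ {l | IsWalkFrom G u v l}) => walkWeight G l) l h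

/-- The `i`-th vertex of the walk `l` starting at `u` (its last vertex if `i` exceeds the
number of edges). -/
def vert : V → List (V × V) → ℕ → V
  | u, [], _ => u
  | u, _ :: _, 0 => u
  | _, e :: l, i + 1 => vert e.2 l i

lemma vert_zero (u : V) (l : List (V × V)) : vert u l 0 = u := by cases l <;> rfl

lemma walk_take {G : WDigraph V} {u v : V} {l : List (V × V)} (h : IsWalkFrom G u v l) (i : ℕ) :
    IsWalkFrom G u (vert u l i) (l.take i) := by
  induction l generalizing u i with
  | nil => simp [vert, IsWalkFrom]
  | cons e l ih =>
    cases i with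
    | zero => simp [vert, IsWalkFrom]
    | succ i => exact ⟨h.1, h.2.1, ih h.2.2 i⟩

lemma walk_drop {G : WDigraph V} {u v : V} {l : List (V × V)} (h : IsWalkFrom G u v l) (i : ℕ) :
    IsWalkFrom G (vert u l i) v (l.drop i) := by
  induction l generalizing u i with
  | nil => simpa [vert, IsWalkFrom] using h
  | cons e l ih =>
    cases i with
    | zero => simpa [vert] using h
    | succ i => exact ih h.2.2 i

lemma vert_length {G : WDigraph V} {u v : V} {l : List (V × V)} (h : IsWalkFrom G u v l) :
    vert u l l.length = v := by
  have := walk_drop h l.length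
  simpa [IsWalkFrom] using this

lemma vert_drop (u : V) (l : List (V × V)) (i j : ℕ) :
    vert (vert u l i) (l.drop i) j = vert u l (i + j) := by
  induction l generalizing u i with
  | nil => simp [vert]
  | cons e l ih =>
    cases i with
    | zero => simp [vert]
    | succ i => rw [Nat.succ_add_eq_add_succ]; simpa [vert] using ih e.2 i

lemma walk_seg {G : WDigraph V} {u v : V} {l : List (V × V)} (h : IsWalkFrom G u v l) (i j : ℕ)
    (hij : i ≤ j) :
    IsWalkFrom G (vert u l i) (vert u l j) ((l.drop i).take (j - i)) := by
  have := walk_take (walk_drop h i) (j - i)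
  rwa [vert_drop, Nat.add_sub_cancel' hij] at this

lemma wsum_take_drop (G : WDigraph V) (l : List (V × V)) (i : ℕ) :
    wsum G (l.take i) + wsum G (l.drop i) = wsum G l := by
  rw [← wsum_append, List.take_append_drop]

lemma wsum_seg (G : WDigraph V) (l : List (V × V)) (i j : ℕ) (hij : i ≤ j) :
    wsum G ((l.drop i).take (j - i)) = wsum G (l.take j) - wsum G (l.take i) := by
  have h : l.take j = l.take i ++ (l.drop i).take (j - i) := by
    conv_lhs => rw [← Nat.add_sub_cancel' hij]
    rw [List.take_add]
  rw [h, wsum_append]; ring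

/-- A walk is simple when its vertices are pairwise distinct. -/
def SimpleWalk (u : V) (l : List (V × V)) : Prop :=
  Set.InjOn (vert u l) (Set.Iic l.length)

lemma SimpleWalk.length_lt {n : ℕ} {u : Fin n} {l : List (Fin n × Fin n)}
    (h : SimpleWalk u l) : l.length < n := by
  have h1 : ((Finset.Iic l.length).image (vert u l)).card = l.length + 1 := by
    rw [Finset.card_image_of_injOn (by simpa [SimpleWalk] using h)]; simp
  have h2 := Finset.card_le_univ ((Finset.Iic l.length).image (vert u l))
  rw [h1, Fintype.card_fin] at h2
  omega

/-- Cutting closed detours makes a walk simple without increasing its weight. -/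
lemma exists_simple {G : WDigraph V} (hG : G.Nonneg) {u v : V} {l : List (V × V)}
    (h : IsWalkFrom G u v l) :
    ∃ l', IsWalkFrom G u v l' ∧ SimpleWalk u l' ∧ wsum G l' ≤ wsum G l := by
  induction hm : l.length using Nat.strong_induction_on generalizing l with
  | _ m ih =>
    by_cases hs : SimpleWalk u l
    · exact ⟨l, h, hs, le_rfl⟩
    · have key : ∃ i j, i < j ∧ j ≤ l.length ∧ vert u l i = vert u l j := by
        simp only [SimpleWalk, Set.InjOn, Set.mem_Iic] at hs
        push Not at hs
        obtain ⟨i, hi, j, hj, hv, hne⟩ := hs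
        rcases lt_or_gt_of_ne hne with hlt | hlt
        · exact ⟨i, j, hlt, hj, hv⟩
        · exact ⟨j, i, hlt, hi, hv.symm⟩
      obtain ⟨i, j, hij, hj, hv⟩ := key
      have hw : IsWalkFrom G u v (l.take i ++ l.drop j) := by
        refine (walk_take h i).append ?_
        rw [hv]; exact walk_drop h j
      have hlen : (l.take i ++ l.drop j).length < m := by
        rw [List.length_append, List.length_take, List.length_drop]; omega
      obtain ⟨l', h1, h2, h3⟩ := ih _ hlen hw rfl
      refine ⟨l', h1, h2, h3.trans ?_⟩
      rw [wsum_append]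
      have e1 := wsum_seg G l i j hij.le
      have e2 := wsum_nonneg hG ((l.drop i).take (j - i))
      have e3 := wsum_take_drop G l j
      linarith

/-- Distances are attained by simple walks. -/
lemma exists_shortest {n : ℕ} {G : WDigraph (Fin n)} (hG : G.Nonneg) {u v : Fin n}
    (h : G.dist u v ≠ ⊤) :
    ∃ l, IsWalkFrom G u v l ∧ SimpleWalk u l ∧ ENNReal.ofReal (wsum G l) = G.dist u v := by
  set T : Set (List (Fin n × Fin n)) := {l | IsWalkFrom G u v l ∧ SimpleWalk u l} with hT
  have hfin : T.Finite := (List.finite_length_lt (Fin n × Fin n) n).subset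
    fun l hl => hl.2.length_lt
  have hne : T.Nonempty := by
    by_contra hcon
    apply h
    rw [WDigraph.dist, iInf₂_eq_top]
    intro l hl
    obtain ⟨l', h1, h2, -⟩ := exists_simple hG hl
    exact absurd ⟨l', h1, h2⟩ hcon
  obtain ⟨l, hl, hmin⟩ := Set.exists_min_image T (wsum G) hfin hne
  refine ⟨l, hl.1, hl.2, le_antisymm ?_ (dist_le_of_walk hl.1)⟩
  refine le_iInf₂ fun l' hl' => ?_
  obtain ⟨l'', h1, h2, h3⟩ := exists_simple hG hl'
  exact ENNReal.ofReal_le_ofReal ((hmin l'' ⟨h1, h2⟩).trans h3)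

lemma dist_self' (G : WDigraph V) (u : V) : G.dist u u = 0 := by
  have := dist_le_of_walk (G := G) (u := u) (v := u) (l := []) rfl
  simpa [wsum_nil] using this

lemma dist_triangle {n : ℕ} {G : WDigraph (Fin n)} (hG : G.Nonneg) (u v x : Fin n) :
    G.dist u x ≤ G.dist u v + G.dist v x := by
  by_cases h1 : G.dist u v = ⊤
  · simp [h1]
  by_cases h2 : G.dist v x = ⊤
  · simp [h2]
  obtain ⟨l, hl, -, e⟩ := exists_shortest hG h1
  obtain ⟨l', hl', -, e'⟩ := exists_shortest hG h2
  rw [← e, ← e', ← ENNReal.ofReal_add (wsum_nonneg hG _) (wsum_nonneg hG _), ← wsum_append]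
  exact dist_le_of_walk (hl.append hl')

lemma dist_symm_le {n : ℕ} {G : WDigraph (Fin n)} (hG : G.Nonneg) (hs : G.Symmetric)
    (u v : Fin n) : G.dist v u ≤ G.dist u v := by
  by_cases h1 : G.dist u v = ⊤
  · simp [h1]
  obtain ⟨l, hl, -, e⟩ := exists_shortest hG h1
  obtain ⟨l', hl', -, e'⟩ := hl.reverse hs
  rw [← e, ← e']
  exact dist_le_of_walk hl'

lemma dist_symm {n : ℕ} {G : WDigraph (Fin n)} (hG : G.Nonneg) (hs : G.Symmetric)
    (u v : Fin n) : G.dist u v = G.dist v u :=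
  le_antisymm (dist_symm_le hG hs v u) (dist_symm_le hG hs u v)

/-! ### Walks in the augmented graph -/

/-- There is a walk from `x` to `y` in `G ∪ H` with at most `h` edges and weight at most `L`. -/
def HopWalk {n : ℕ} (G : WDigraph (Fin n)) (H : Finset (Fin n × Fin n)) (x y : Fin n)
    (h : ℕ) (L : ℝ) : Prop :=
  ∃ l, IsWalkFrom (G.augment H) x y l ∧ l.length ≤ h ∧ wsum (G.augment H) l ≤ L

section Augment

variable {n : ℕ} {G : WDigraph (Fin n)} {H : Finset (Fin n × Fin n)}

lemma augment_nonneg (hG : G.Nonneg) : (G.augment H).Nonneg := by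
  intro e
  simp only [WDigraph.augment]
  split_ifs
  · exact ENNReal.toReal_nonneg
  · exact hG e

lemma augment_symmetric (hG : G.Nonneg) (hs : G.Symmetric)
    (hH : ∀ x y, (x, y) ∈ H → (y, x) ∈ H) : (G.augment H).Symmetric := by
  rintro ⟨x, y⟩ he
  have hiff : (y, x) ∈ H ↔ (x, y) ∈ H := ⟨hH y x, hH x y⟩
  simp only [WDigraph.augment, Finset.mem_union, hiff] at he ⊢
  by_cases h : (x, y) ∈ H
  · simp [h, dist_symm hG hs x y]
  · have := hs (x, y) (by simpa [h] using he)
    simpa [h] using this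

lemma dist_edge_le {e : Fin n × Fin n} (he : e ∈ G.edges) :
    G.dist e.1 e.2 ≤ ENNReal.ofReal (G.w e) := by
  have : IsWalkFrom G e.1 e.2 [e] := ⟨he, rfl, rfl⟩
  simpa [wsum] using dist_le_of_walk this

/-- Added edges carry true distances, so `G ∪ H` has no walk lighter than `dist_G`. -/
lemma dist_le_augment (hG : G.Nonneg) (hfin : ∀ x y, (x, y) ∈ H → G.dist x y ≠ ⊤)
    {u v : Fin n} {l : List (Fin n × Fin n)} (h : IsWalkFrom (G.augment H) u v l) :
    G.dist u v ≤ ENNReal.ofReal (wsum (G.augment H) l) := by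
  induction l generalizing u with
  | nil => simp only [IsWalkFrom] at h; subst h; simp [dist_self']
  | cons e l ih =>
    obtain ⟨he, rfl, hl⟩ := h
    rw [wsum_cons, ENNReal.ofReal_add (augment_nonneg hG e) (wsum_nonneg (augment_nonneg hG) l)]
    refine (dist_triangle hG e.1 e.2 v).trans (add_le_add ?_ (ih hl))
    by_cases hH : e ∈ H
    · simp only [WDigraph.augment, hH, if_true]
      rw [ENNReal.ofReal_toReal (hfin _ _ hH)]
    · simp only [WDigraph.augment, hH, if_false]
      apply dist_edge_le
      simpa [WDigraph.augment, hH] using he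

/-- A walk of `G` survives in `G ∪ H`, where its weight can only drop. -/
lemma walk_augment (hG : G.Nonneg) {u v : Fin n} {l : List (Fin n × Fin n)}
    (h : IsWalkFrom G u v l) :
    IsWalkFrom (G.augment H) u v l ∧ wsum (G.augment H) l ≤ wsum G l := by
  induction l generalizing u with
  | nil => exact ⟨h, le_rfl⟩
  | cons e l ih =>
    obtain ⟨he, heu, hl⟩ := h
    obtain ⟨h1, h2⟩ := ih hl
    refine ⟨⟨?_, heu, h1⟩, ?_⟩
    · simp [WDigraph.augment, he]
    · rw [wsum_cons, wsum_cons]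
      refine add_le_add ?_ h2
      simp only [WDigraph.augment]
      split_ifs
      · exact ENNReal.toReal_le_of_le_ofReal (hG e) (dist_edge_le he)
      · exact le_rfl

lemma HopWalk.of_walk (hG : G.Nonneg) {u v : Fin n} {l : List (Fin n × Fin n)}
    (h : IsWalkFrom G u v l) : HopWalk G H u v l.length (wsum G l) :=
  ⟨l, (walk_augment hG h).1, le_rfl, (walk_augment hG h).2⟩

lemma HopWalk.of_mem {x y : Fin n} (h : (x, y) ∈ H) {L : ℝ} (hL : 0 ≤ L)
    (hd : G.dist x y ≤ ENNReal.ofReal L) : HopWalk G H x y 1 L := by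
  refine ⟨[(x, y)], ⟨by simp [WDigraph.augment, h], rfl, rfl⟩, by simp, ?_⟩
  simp only [wsum, WDigraph.augment, List.map_cons, h, if_true, List.map_nil, List.sum_cons,
    List.sum_nil, add_zero]
  exact ENNReal.toReal_le_of_le_ofReal hL hd

lemma HopWalk.dist_le (hG : G.Nonneg) (hfin : ∀ x y, (x, y) ∈ H → G.dist x y ≠ ⊤)
    {x y : Fin n} {h : ℕ} {L : ℝ} (hw : HopWalk G H x y h L) :
    G.dist x y ≤ ENNReal.ofReal L := by
  obtain ⟨l, hl, -, hL⟩ := hw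
  exact (dist_le_augment hG hfin hl).trans (ENNReal.ofReal_le_ofReal hL)

lemma HopWalk.nonneg (hG : G.Nonneg) {x y : Fin n} {h : ℕ} {L : ℝ}
    (hw : HopWalk G H x y h L) : 0 ≤ L := by
  obtain ⟨l, -, -, hL⟩ := hw
  exact (wsum_nonneg (augment_nonneg hG) l).trans hL

lemma HopWalk.trans {x y z : Fin n} {h h' : ℕ} {L L' : ℝ}
    (hw : HopWalk G H x y h L) (hw' : HopWalk G H y z h' L') :
    HopWalk G H x z (h + h') (L + L') := by
  obtain ⟨l, h1, h2, h3⟩ := hw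
  obtain ⟨l', h1', h2', h3'⟩ := hw'
  refine ⟨l ++ l', h1.append h1', ?_, ?_⟩
  · rw [List.length_append]; omega
  · rw [wsum_append]; linarith

lemma HopWalk.symm (hG : G.Nonneg) (hs : G.Symmetric)
    (hH : ∀ x y, (x, y) ∈ H → (y, x) ∈ H) {x y : Fin n} {h : ℕ} {L : ℝ}
    (hw : HopWalk G H x y h L) : HopWalk G H y x h L := by
  obtain ⟨l, h1, h2, h3⟩ := hw
  obtain ⟨l', h1', h2', h3'⟩ := h1.reverse (augment_symmetric hG hs hH)
  exact ⟨l', h1', h2' ▸ h2, h3' ▸ h3⟩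

lemma HopWalk.mono {x y : Fin n} {h h' : ℕ} {L L' : ℝ}
    (hw : HopWalk G H x y h L) (hh : h ≤ h') (hL : L ≤ L') : HopWalk G H x y h' L' := by
  obtain ⟨l, h1, h2, h3⟩ := hw
  exact ⟨l, h1, h2.trans hh, h3.trans hL⟩

/-- For the hopset property it suffices to approximate the finite distances: the lower bound
holds for any `H` whose edges have finite distance. -/
lemma isHopset_of_hopWalk (hG : G.Nonneg) (hfin : ∀ x y, (x, y) ∈ H → G.dist x y ≠ ⊤)
    {β : ℕ} {ε : ℝ} (hε : 0 < ε)
    (hw : ∀ u v, G.dist u v ≠ ⊤ → HopWalk G H u v β ((1 + ε) * (G.dist u v).toReal)) :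
    IsHopset G β ε H := by
  intro u v
  constructor
  · exact le_iInf₂ fun l hl => dist_le_augment hG hfin hl.1
  · by_cases h : G.dist u v = ⊤
    · rw [h, ENNReal.mul_top (by simp; linarith)]; exact le_top
    · obtain ⟨l, h1, h2, h3⟩ := hw u v h
      calc (G.augment H).hopDist β u v ≤ walkWeight (G.augment H) l :=
            iInf₂_le (f := fun (l : List (Fin n × Fin n))
              (_ : l ∈ {l | IsWalkFrom (G.augment H) u v l ∧ l.length ≤ β}) =>
              walkWeight (G.augment H) l) l ⟨h1, h2⟩
        _ ≤ ENNReal.ofReal ((1 + ε) * (G.dist u v).toReal) := ENNReal.ofReal_le_ofReal h3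
        _ = ENNReal.ofReal (1 + ε) * G.dist u v := by
            rw [ENNReal.ofReal_mul (by linarith), ENNReal.ofReal_toReal h]

end Augment

end Hopsets

namespace Hopsets

/-! ### Greedy choice of a sparser level -/

section Level

/-- The bunch of `v`: the points of `A` strictly closer to `v` than every point of `S`. -/
noncomputable def bunch (d : V → V → ℝ≥0∞) (A S : Finset V) (v : V) : Finset V := by
  classical exact A.filter fun u => ∀ s ∈ S, d v u < d v s

lemma mem_bunch {d : V → V → ℝ≥0∞} {A S : Finset V} {v u : V} :
    u ∈ bunch d A S v ↔ u ∈ A ∧ ∀ s ∈ S, d v u < d v s := by simp [bunch]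

/-- Averaged over the `m` choices of `x`, adding `x` to `S` shrinks a bunch of size `b` to at
most `b - b² / (2m)`: for `x` inside the bunch, each unordered pair of bunch members is
counted at most once. -/
lemma sum_bunch_insert_le [DecidableEq V] (d : V → V → ℝ≥0∞) (A S : Finset V) (v : V) :
    ∑ x ∈ A, ((bunch d A (insert x S) v).card : ℝ) ≤
      A.card * (bunch d A S v).card - ((bunch d A S v).card : ℝ) ^ 2 / 2 := by
  classical
  set B := bunch d A S v with hB
  have hBA : B ⊆ A := fun u hu => (mem_bunch.1 hu).1
  have hins : ∀ x, bunch d A (insert x S) v = B.filter fun u => d v u < d v x := by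
    intro x; ext u
    simp only [hB, Finset.mem_filter, mem_bunch, Finset.mem_insert, forall_eq_or_imp]
    tauto
  have h1 : ∑ x ∈ A, ((bunch d A (insert x S) v).card : ℝ) =
      ∑ x ∈ B, ((B.filter fun u => d v u < d v x).card : ℝ) +
      ∑ x ∈ A \ B, ((B.filter fun u => d v u < d v x).card : ℝ) := by
    simp_rw [hins]
    rw [add_comm, Finset.sum_sdiff hBA]
  have h2 : ∑ x ∈ A \ B, ((B.filter fun u => d v u < d v x).card : ℝ) ≤
      (A.card - B.card) * B.card := by
    have : ∑ x ∈ A \ B, ((B.filter fun u => d v u < d v x).card : ℝ) ≤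
        ∑ x ∈ A \ B, (B.card : ℝ) :=
      Finset.sum_le_sum fun x _ => by exact_mod_cast Finset.card_filter_le _ _
    rw [Finset.sum_const, nsmul_eq_mul, Finset.cast_card_sdiff hBA] at this
    exact this
  have hswap : ∑ x ∈ B, ((B.filter fun u => d v u < d v x).card : ℝ) =
      ∑ x ∈ B, ((B.filter fun u => d v x < d v u).card : ℝ) := by
    simp_rw [Finset.card_filter]
    push_cast
    rw [Finset.sum_comm]
  have h3 : ∑ x ∈ B, ((B.filter fun u => d v u < d v x).card : ℝ) +
      ∑ x ∈ B, ((B.filter fun u => d v x < d v u).card : ℝ) ≤ (B.card : ℝ) ^ 2 := by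
    rw [← Finset.sum_add_distrib, sq]
    calc _ ≤ ∑ x ∈ B, (B.card : ℝ) := by
          refine Finset.sum_le_sum fun x _ => ?_
          rw [← Nat.cast_add, ← Finset.card_union_of_disjoint]
          · exact_mod_cast Finset.card_le_card
              (Finset.union_subset (Finset.filter_subset _ _) (Finset.filter_subset _ _))
          · rw [Finset.disjoint_filter]
            intro u _ h h'
            exact lt_asymm h h'
      _ = _ := by rw [Finset.sum_const, nsmul_eq_mul]
  rw [h1]
  nlinarith

lemma recursion_bound {φ t : ℝ} (h1 : φ ≤ 1) (h : φ * (t + 1) ≤ 2) :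
    (φ - φ ^ 2 / 2) * (t + 2) ≤ 2 := by
  nlinarith [sq_nonneg φ, mul_nonneg (sub_nonneg.2 h) (sub_nonneg.2 h1)]

/-- Some `t` points of `A` leave bunches of total size at most `2|A|² / (t + 1)`. -/
lemma exists_sparse [DecidableEq V] (d : V → V → ℝ≥0∞) (A : Finset V) (t : ℕ) :
    ∃ S : Finset V, S.card ≤ t ∧
      ∑ v ∈ A, ((bunch d A S v).card : ℝ) ≤ 2 * (A.card : ℝ) ^ 2 / (t + 1) := by
  rcases A.eq_empty_or_nonempty with rfl | hA
  · exact ⟨∅, by simp, by simp⟩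
  have hm : (0 : ℝ) < A.card := by exact_mod_cast hA.card_pos
  induction t with
  | zero =>
    refine ⟨∅, by simp, ?_⟩
    have : ∀ v, bunch d A ∅ v = A := fun v => by ext; simp [mem_bunch]
    simp only [this, Finset.sum_const, nsmul_eq_mul]
    push_cast
    nlinarith
  | succ t ih =>
    obtain ⟨S, hS, hΦ⟩ := ih
    set Φ : ℝ := ∑ v ∈ A, ((bunch d A S v).card : ℝ) with hΦdef
    set m : ℝ := (A.card : ℝ) with hmdef
    have hΦm : Φ ≤ m ^ 2 := by
      calc Φ ≤ ∑ v ∈ A, m := Finset.sum_le_sum fun v _ => by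
            rw [hmdef]
            exact_mod_cast Finset.card_le_card fun u hu => (mem_bunch.1 hu).1
        _ = m ^ 2 := by rw [Finset.sum_const, nsmul_eq_mul, sq]
    have hcs : Φ ^ 2 ≤ m * ∑ v ∈ A, ((bunch d A S v).card : ℝ) ^ 2 := sq_sum_le_card_mul_sum_sq
    have havg : ∑ x ∈ A, ∑ v ∈ A, ((bunch d A (insert x S) v).card : ℝ) ≤
        ∑ x ∈ A, (Φ - Φ ^ 2 / (2 * m ^ 2)) := by
      rw [Finset.sum_comm, Finset.sum_const, nsmul_eq_mul]
      calc _ ≤ ∑ v ∈ A, (m * (bunch d A S v).card - ((bunch d A S v).card : ℝ) ^ 2 / 2) :=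
            Finset.sum_le_sum fun v _ => sum_bunch_insert_le d A S v
        _ = m * Φ - (∑ v ∈ A, ((bunch d A S v).card : ℝ) ^ 2) / 2 := by
            rw [Finset.sum_sub_distrib, ← Finset.mul_sum, ← Finset.sum_div]
        _ ≤ m * Φ - Φ ^ 2 / m / 2 := by
            have : Φ ^ 2 / m ≤ ∑ v ∈ A, ((bunch d A S v).card : ℝ) ^ 2 := by
              rw [div_le_iff₀ hm]; linarith
            linarith
        _ = m * (Φ - Φ ^ 2 / (2 * m ^ 2)) := by field_simp
    obtain ⟨x, -, hx⟩ := Finset.exists_le_of_sum_le hA havg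
    refine ⟨insert x S, (Finset.card_insert_le _ _).trans (by omega), hx.trans ?_⟩
    -- in terms of `φ = Φ / m²` the recursion is `φ ↦ φ - φ² / 2`, increasing on `[0, 1]`
    obtain ⟨φ, hφ⟩ : ∃ φ : ℝ, φ = Φ / m ^ 2 := ⟨_, rfl⟩
    have hm2 : (0 : ℝ) < m ^ 2 := pow_pos hm 2
    have hΦφ : Φ = φ * m ^ 2 := by rw [hφ]; exact (div_mul_cancel₀ _ hm2.ne').symm
    have hφ1 : φ ≤ 1 := by rw [hφ, div_le_one hm2]; exact hΦm
    have ht : (0 : ℝ) < (t : ℝ) + 1 := by positivity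
    have hφt : φ * (t + 1) ≤ 2 := by
      rw [hΦφ, le_div_iff₀ ht] at hΦ
      have : (φ * (t + 1)) * m ^ 2 ≤ 2 * m ^ 2 := by linarith
      exact le_of_mul_le_mul_right this hm2
    have hgoal := recursion_bound hφ1 hφt
    have e : Φ - Φ ^ 2 / (2 * m ^ 2) = (φ - φ ^ 2 / 2) * m ^ 2 := by
      rw [hΦφ]; field_simp
    have ht' : (0 : ℝ) < ((t + 1 : ℕ) : ℝ) + 1 := by positivity
    rw [e, le_div_iff₀ ht']
    have := mul_le_mul_of_nonneg_right hgoal hm2.le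
    push_cast
    linarith

/-- One level of the Thorup–Zwick construction: few points `A'` and few edges `E` such that any
two points of `A` at finite distance are joined by an edge of `E`, or each has an edge of `E`
into `A'` that is no longer than their distance. -/
lemma exists_level [DecidableEq V] (d : V → V → ℝ≥0∞) (hd : ∀ x y, d x y = d y x) (A : Finset V) (t : ℕ) :
    ∃ (A' : Finset V) (E : Finset (V × V)), A'.card ≤ t ∧
      (E.card : ℝ) ≤ 2 * (2 * (A.card : ℝ) ^ 2 / (t + 1) + A.card) ∧
      (∀ x y, (x, y) ∈ E → d x y ≠ ⊤) ∧ (∀ x y, (x, y) ∈ E → (y, x) ∈ E) ∧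
      ∀ x ∈ A, ∀ y ∈ A, d x y ≠ ⊤ → (x, y) ∈ E ∨
        ((∃ z ∈ A', (x, z) ∈ E ∧ d x z ≤ d x y) ∧ (∃ z ∈ A', (y, z) ∈ E ∧ d y z ≤ d x y)) := by
  classical
  obtain ⟨S, hS, hsum⟩ := exists_sparse d A t
  have hpiv : ∀ x, ∃ p, S.Nonempty → p ∈ S ∧ ∀ s ∈ S, d x p ≤ d x s := by
    intro x
    by_cases h : S.Nonempty
    · obtain ⟨p, hp, hmin⟩ := Finset.exists_min_image S (d x) h
      exact ⟨p, fun _ => ⟨hp, hmin⟩⟩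
    · exact ⟨x, fun h' => absurd h' h⟩
  choose piv hpiv using hpiv
  let E₁ : Finset (V × V) := A.biUnion fun v => (insert (piv v) (bunch d A S v)).image (v, ·)
  let E₀ : Finset (V × V) := E₁.filter fun e => d e.1 e.2 ≠ ⊤
  let E : Finset (V × V) := E₀ ∪ E₀.image (Prod.swap (α := V) (β := V))
  have hsymm : ∀ x y, (x, y) ∈ E → (y, x) ∈ E := by
    intro x y h
    simp only [E, Finset.mem_union, Finset.mem_image, Prod.exists, Prod.swap_prod_mk,
      Prod.mk.injEq] at h ⊢
    rcases h with h | ⟨a, b, h, rfl, rfl⟩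
    · exact Or.inr ⟨x, y, h, rfl, rfl⟩
    · exact Or.inl h
  have hE₁ : ∀ {v u}, v ∈ A → u ∈ insert (piv v) (bunch d A S v) → d v u ≠ ⊤ → (v, u) ∈ E := by
    intro v u hv hu hvu
    refine Finset.mem_union_left _ (Finset.mem_filter.2 ⟨?_, hvu⟩)
    exact Finset.mem_biUnion.2 ⟨v, hv, Finset.mem_image.2 ⟨u, hu, rfl⟩⟩
  have hcase : ∀ x ∈ A, ∀ y ∈ A, d x y ≠ ⊤ →
      (x, y) ∈ E ∨ ∃ z ∈ S, (x, z) ∈ E ∧ d x z ≤ d x y := by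
    intro x hx y hy hxy
    by_cases hb : y ∈ bunch d A S x
    · exact Or.inl (hE₁ hx (Finset.mem_insert_of_mem hb) hxy)
    · right
      rw [mem_bunch] at hb
      push Not at hb
      obtain ⟨s, hs, hsy⟩ := hb hy
      obtain ⟨hp, hmin⟩ := hpiv x ⟨s, hs⟩
      have hle := (hmin s hs).trans hsy
      exact ⟨piv x, hp, hE₁ hx (Finset.mem_insert_self _ _) (ne_top_of_le_ne_top hxy hle), hle⟩
  refine ⟨S, E, hS, ?_, ?_, hsymm, ?_⟩
  · have h1 : (E₁.card : ℝ) ≤ 2 * (A.card : ℝ) ^ 2 / (t + 1) + A.card := by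
      have : E₁.card ≤ ∑ v ∈ A, ((bunch d A S v).card + 1) :=
        Finset.card_biUnion_le.trans (Finset.sum_le_sum fun v _ =>
          Finset.card_image_le.trans (Finset.card_insert_le _ _))
      have h' : (E₁.card : ℝ) ≤ ∑ v ∈ A, (((bunch d A S v).card : ℝ) + 1) := by
        exact_mod_cast this
      rw [Finset.sum_add_distrib, Finset.sum_const, nsmul_eq_mul, mul_one] at h'
      linarith
    have h0 : E₀.card ≤ E₁.card := Finset.card_filter_le _ _
    have h2 : E.card ≤ E₀.card + E₀.card :=
      (Finset.card_union_le _ _).trans (Nat.add_le_add_left Finset.card_image_le _)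
    have h3 : (E.card : ℝ) ≤ 2 * E₁.card := by
      have : E.card ≤ 2 * E₁.card := by omega
      exact_mod_cast this
    linarith
  · intro x y h
    simp only [E, Finset.mem_union, Finset.mem_image, Prod.exists, Prod.swap_prod_mk,
      Prod.mk.injEq] at h
    rcases h with h | ⟨a, b, h, rfl, rfl⟩
    · exact (Finset.mem_filter.1 h).2
    · rw [hd]; exact (Finset.mem_filter.1 h).2
  · intro x hx y hy hxy
    rcases hcase x hx y hy hxy with h | hx'
    · exact Or.inl h
    rcases hcase y hy x hx (by rwa [hd]) with h | hy'
    · exact Or.inl (hsymm _ _ h)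
    · rw [hd y x] at hy'
      exact Or.inr ⟨hx', hy'⟩

end Level

/-! ### Hitting sets -/

/-- Greedy hitting set: `t` points leave at most an `exp (-tD/n)` fraction of the sets of size
at least `D` unhit. -/
lemma exists_partial_hitting {n : ℕ} {ι : Type} (D : ℕ) (U : Finset ι) (F : ι → Finset (Fin n))
    (hF : ∀ i ∈ U, D ≤ (F i).card) (t : ℕ) :
    ∃ S : Finset (Fin n), S.card ≤ t ∧
      ((U.filter fun i => Disjoint (F i) S).card : ℝ) ≤ U.card * Real.exp (-(t * D / n)) := by
  classical
  induction t with
  | zero => exact ⟨∅, by simp, by simp⟩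
  | succ t ih =>
    obtain ⟨S, hS, hU⟩ := ih
    set R := U.filter fun i => Disjoint (F i) S with hR
    rcases Nat.eq_zero_or_pos n with rfl | hn
    · refine ⟨S, by omega, ?_⟩
      simp
    have : Nonempty (Fin n) := ⟨⟨0, hn⟩⟩
    have hn' : (0 : ℝ) < n := by exact_mod_cast hn
    have hsum : ∑ x : Fin n, (R.card * (D / n) : ℝ) ≤
        ∑ x : Fin n, ((R.filter fun i => x ∈ F i).card : ℝ) := by
      have e : ∑ x : Fin n, ((R.filter fun i => x ∈ F i).card : ℝ) =
          ∑ i ∈ R, ((F i).card : ℝ) := by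
        simp_rw [Finset.card_filter]
        push_cast
        rw [Finset.sum_comm]
        refine Finset.sum_congr rfl fun i _ => ?_
        simp
      rw [e, Finset.sum_const, Finset.card_univ, Fintype.card_fin, nsmul_eq_mul]
      calc (n : ℝ) * (R.card * (D / n)) = ∑ i ∈ R, (D : ℝ) := by
            rw [Finset.sum_const, nsmul_eq_mul]; field_simp
        _ ≤ _ := Finset.sum_le_sum fun i hi => by
            exact_mod_cast hF i (Finset.mem_filter.1 hi).1
    obtain ⟨x, -, hx⟩ := Finset.exists_le_of_sum_le Finset.univ_nonempty hsum
    refine ⟨insert x S, (Finset.card_insert_le _ _).trans (by omega), ?_⟩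
    have e : (U.filter fun i => Disjoint (F i) (insert x S)) = R.filter fun i => ¬ x ∈ F i := by
      ext i
      simp only [hR, Finset.mem_filter, Finset.disjoint_insert_right]
      tauto
    have hc : ((R.filter fun i => x ∈ F i).card : ℝ) + (R.filter fun i => ¬ x ∈ F i).card =
        R.card := by
      exact_mod_cast Finset.card_filter_add_card_filter_not (s := R) fun i => x ∈ F i
    rw [e]
    have hexp : 1 - (D : ℝ) / n ≤ Real.exp (-(D / n)) := by
      have := Real.add_one_le_exp (-((D : ℝ) / n)); linarith
    calc ((R.filter fun i => ¬ x ∈ F i).card : ℝ) ≤ R.card * (1 - D / n) := by linarith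
      _ ≤ R.card * Real.exp (-(D / n)) := by gcongr
      _ ≤ U.card * Real.exp (-(t * D / n)) * Real.exp (-(D / n)) := by gcongr
      _ = U.card * Real.exp (-((t + 1 : ℕ) * D / n)) := by
          rw [mul_assoc, ← Real.exp_add]; congr 2; push_cast; ring

lemma exists_hitting {n : ℕ} {ι : Type} (D : ℕ) (U : Finset ι) (F : ι → Finset (Fin n))
    (hF : ∀ i ∈ U, D ≤ (F i).card) (t : ℕ)
    (ht : (U.card : ℝ) * Real.exp (-(t * D / n)) < 1) :
    ∃ S : Finset (Fin n), S.card ≤ t ∧ ∀ i ∈ U, ∃ x ∈ F i, x ∈ S := by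
  classical
  obtain ⟨S, hS, hU⟩ := exists_partial_hitting D U F hF t
  refine ⟨S, hS, fun i hi => ?_⟩
  have h0 : (U.filter fun i => Disjoint (F i) S).card = 0 := by
    have : ((U.filter fun i => Disjoint (F i) S).card : ℝ) < 1 := hU.trans_lt ht
    exact Nat.lt_one_iff.1 (by exact_mod_cast this)
  rw [Finset.card_eq_zero, Finset.filter_eq_empty_iff] at h0
  exact Finset.not_disjoint_iff.1 (h0 hi)

end Hopsets

namespace Hopsets

/-! ### The stretch and hop analysis -/

section Core

variable {W : V → V → ℕ → ℝ → Prop} {D : ℕ} {p : ℕ → V} {pos : ℕ → ℝ} {good : Set ℕ} {S : Set V}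

/-- Cut the part of the path between two good indices into pieces of length at most `lam` joined
by jumps of at most `D` hops. If every piece is well approximated, so is the whole; otherwise
`l` is the left end of the first bad piece and `r` the right end of the last one. -/
lemma segments
    (htrans : ∀ x y z h h' L L', W x y h L → W y z h' L' → W x z (h + h') (L + L'))
    (hmono : ∀ x y h h' L L', W x y h L → h ≤ h' → L ≤ L' → W x y h' L')
    (hpos : Monotone pos) (hp : ∀ a b, a ≤ b → W (p a) (p b) (b - a) (pos b - pos a))
    (hgap : ∀ a ∈ good, ∀ b ∈ good, a < b → ∃ c ∈ good, a < c ∧ c ≤ b ∧ c ≤ a + D)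
    (B : Set V) (h : ℕ) (σ lam : ℝ) (hσ : 0 ≤ σ) (hlam : 0 ≤ lam)
    (hP : ∀ a ∈ good, ∀ b ∈ good, a ≤ b → W (p a) (p b) h ((1 + σ) * (pos b - pos a)) ∨
      ((∃ z ∈ B, W (p a) z h (2 * (pos b - pos a))) ∧
        (∃ z ∈ B, W (p b) z h (2 * (pos b - pos a)))))
    (j : ℕ) : ∀ a ∈ good, ∀ b ∈ good, a ≤ b → pos b - pos a ≤ (j + 1) * lam →
      W (p a) (p b) ((j + 1) * (h + D)) ((1 + σ) * (pos b - pos a)) ∨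
      ∃ l r, a ≤ l ∧ l ≤ r ∧ r ≤ b ∧
        W (p a) (p l) ((j + 1) * (h + D)) ((1 + σ) * (pos l - pos a)) ∧
        W (p r) (p b) ((j + 1) * (h + D)) ((1 + σ) * (pos b - pos r)) ∧
        (∃ z ∈ B, W (p l) z h (2 * lam)) ∧ (∃ z ∈ B, W (p r) z h (2 * lam)) := by
  have hrefl : ∀ a h', W (p a) (p a) h' ((1 + σ) * (pos a - pos a)) := fun a h' =>
    hmono _ _ _ _ _ _ (hp a a le_rfl) (by simp) (by simp)
  have hshort : ∀ a ∈ good, ∀ b ∈ good, a ≤ b → pos b - pos a ≤ lam →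
      W (p a) (p b) h ((1 + σ) * (pos b - pos a)) ∨
      ((∃ z ∈ B, W (p a) z h (2 * lam)) ∧ (∃ z ∈ B, W (p b) z h (2 * lam))) := by
    intro a ha b hb hab hle
    rcases hP a ha b hb hab with h1 | ⟨⟨z, hz, h1⟩, ⟨z', hz', h2⟩⟩
    · exact Or.inl h1
    · exact Or.inr ⟨⟨z, hz, hmono _ _ _ _ _ _ h1 le_rfl (by linarith)⟩,
        ⟨z', hz', hmono _ _ _ _ _ _ h2 le_rfl (by linarith)⟩⟩
  have hone : ∀ j : ℕ, ∀ a ∈ good, ∀ b ∈ good, a ≤ b → pos b - pos a ≤ lam →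
      W (p a) (p b) ((j + 1) * (h + D)) ((1 + σ) * (pos b - pos a)) ∨
      ∃ l r, a ≤ l ∧ l ≤ r ∧ r ≤ b ∧
        W (p a) (p l) ((j + 1) * (h + D)) ((1 + σ) * (pos l - pos a)) ∧
        W (p r) (p b) ((j + 1) * (h + D)) ((1 + σ) * (pos b - pos r)) ∧
        (∃ z ∈ B, W (p l) z h (2 * lam)) ∧ (∃ z ∈ B, W (p r) z h (2 * lam)) := by
    intro j a ha b hb hab hle
    rcases hshort a ha b hb hab hle with h1 | ⟨h1, h2⟩
    · exact Or.inl (hmono _ _ _ _ _ _ h1 (by nlinarith) le_rfl)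
    · exact Or.inr ⟨a, b, le_rfl, hab, le_rfl, hrefl _ _, hrefl _ _, h1, h2⟩
  induction j with
  | zero =>
    intro a ha b hb hab hle
    exact hone 0 a ha b hb hab (by simpa using hle)
  | succ j ih =>
    intro a ha b hb hab hle
    by_cases hle1 : pos b - pos a ≤ lam
    · exact hone (j + 1) a ha b hb hab hle1
    -- `c` ends the first piece, `e` starts the second
    obtain ⟨c, ⟨hc, hac, hcb, hcl⟩, hmax⟩ := Set.exists_max_image
      {c | c ∈ good ∧ a ≤ c ∧ c ≤ b ∧ pos c - pos a ≤ lam} id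
      ((Set.finite_Iic b).subset fun c hc => hc.2.2.1) ⟨a, ha, le_rfl, hab, by simpa using hlam⟩
    have hcb' : c < b := by
      rcases hcb.lt_or_eq with h1 | rfl
      · exact h1
      · exact absurd hcl hle1
    obtain ⟨e, he, hce, heb, heD⟩ := hgap c hc b hb hcb'
    have hel : lam < pos e - pos a := by
      by_contra hcon
      have := hmax e ⟨he, by omega, heb, not_lt.1 hcon⟩
      simp only [id] at this
      omega
    have hjump : W (p c) (p e) D ((1 + σ) * (pos e - pos c)) := by
      have := hpos hce.le
      exact hmono _ _ _ _ _ _ (hp c e hce.le) (by omega) (by nlinarith)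
    have hN : (j + 1 + 1) * (h + D) = (j + 1) * (h + D) + (h + D) := by ring
    have hbig : (j + 1) * (h + D) ≤ (j + 1 + 1) * (h + D) := by omega
    rcases ih e he b hb heb (by push_cast at hle; linarith) with
      h2 | ⟨l, r, hel', hlr, hrb, h2, h3, h4, h5⟩
    · have htail := htrans _ _ _ _ _ _ _ hjump h2
      rcases hshort a ha c hc hac hcl with h1 | ⟨h1, h1'⟩
      · left
        exact hmono _ _ _ _ _ _ (htrans _ _ _ _ _ _ _ h1 htail) (by omega) (by linarith)
      · right
        exact ⟨a, c, le_rfl, hac, hcb, hrefl _ _,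
          hmono _ _ _ _ _ _ htail (by omega) (by linarith), h1, h1'⟩
    · right
      rcases hshort a ha c hc hac hcl with h1 | ⟨h1, -⟩
      · exact ⟨l, r, by omega, hlr, hrb, hmono _ _ _ _ _ _
          (htrans _ _ _ _ _ _ _ h1 (htrans _ _ _ _ _ _ _ hjump h2)) (by omega) (by linarith),
          hmono _ _ _ _ _ _ h3 hbig le_rfl, h4, h5⟩
      · exact ⟨a, r, le_rfl, by omega, hrb, hrefl _ _, hmono _ _ _ _ _ _ h3 hbig le_rfl, h1, h5⟩

/-- At level `i`, two good points of the path are either joined by few hops with stretch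
`1 + 8iδ`, or each of them reaches `A (i + 1)` within twice their distance. -/
lemma level_analysis
    (htrans : ∀ x y z h h' L L', W x y h L → W y z h' L' → W x z (h + h') (L + L'))
    (hsymm : ∀ x y h L, W x y h L → W y x h L)
    (hmono : ∀ x y h h' L L', W x y h L → h ≤ h' → L ≤ L' → W x y h' L')
    (hpos : Monotone pos) (hp : ∀ a b, a ≤ b → W (p a) (p b) (b - a) (pos b - pos a))
    (hgap : ∀ a ∈ good, ∀ b ∈ good, a < b → ∃ c ∈ good, a < c ∧ c ≤ b ∧ c ≤ a + D)
    (hD : 1 ≤ D) (A : ℕ → Set V) (hA : ∀ a ∈ good, p a ∈ A 0) (k : ℕ)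
    (hlevel : ∀ i ≤ k, ∀ x ∈ A i, ∀ y ∈ A i, ∀ h L, W x y h L → W x y 1 L ∨
      ((∃ z ∈ A (i + 1), W x z 1 L) ∧ (∃ z ∈ A (i + 1), W y z 1 L)))
    (δ : ℝ) (hδ : 0 < δ) (hδk : 8 * δ * k ≤ 1) (j : ℕ) (hj : 1 ≤ (j + 1) * δ)
    (i : ℕ) (hi : i ≤ k) : ∀ a ∈ good, ∀ b ∈ good, a ≤ b →
      W (p a) (p b) (D * (4 * (j + 1) + 3) ^ i) ((1 + 8 * δ * i) * (pos b - pos a)) ∨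
      ((∃ z ∈ A (i + 1), W (p a) z (D * (4 * (j + 1) + 3) ^ i) (2 * (pos b - pos a))) ∧
        (∃ z ∈ A (i + 1), W (p b) z (D * (4 * (j + 1) + 3) ^ i) (2 * (pos b - pos a)))) := by
  induction i with
  | zero =>
    intro a ha b hb hab
    have h0 := hpos hab
    rcases hlevel 0 hi _ (hA a ha) _ (hA b hb) _ _ (hp a b hab) with h1 | ⟨⟨z, hz, h1⟩, z', hz', h2⟩
    · exact Or.inl (hmono _ _ _ _ _ _ h1 (by simpa using hD) (by simp))
    · exact Or.inr ⟨⟨z, hz, hmono _ _ _ _ _ _ h1 (by simpa using hD) (by linarith)⟩,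
        ⟨z', hz', hmono _ _ _ _ _ _ h2 (by simpa using hD) (by linarith)⟩⟩
  | succ i ih =>
    intro a ha b hb hab
    obtain ⟨h, hh⟩ : ∃ h, h = D * (4 * (j + 1) + 3) ^ i := ⟨_, rfl⟩
    have hh' : D * (4 * (j + 1) + 3) ^ (i + 1) = 4 * ((j + 1) * h) + 3 * h := by
      rw [pow_succ, hh]; ring
    have hDh : D ≤ h := by rw [hh]; exact Nat.le_mul_of_pos_right _ (by positivity)
    have hDh' : (j + 1) * D ≤ (j + 1) * h := Nat.mul_le_mul_left _ hDh
    have hsum : (j + 1) * (h + D) = (j + 1) * h + (j + 1) * D := by ring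
    rw [hh']
    rw [← hh] at ih
    have h0 : 0 ≤ pos b - pos a := sub_nonneg.2 (hpos hab)
    have hik : 8 * δ * ((i + 1 : ℕ) : ℝ) ≤ 1 := by
      refine le_trans ?_ hδk
      gcongr
    push_cast at hik ⊢
    have hi0 : (0 : ℝ) ≤ i := Nat.cast_nonneg i
    obtain ⟨σ, hσ⟩ : ∃ σ, σ = 8 * δ * (i : ℝ) := ⟨_, rfl⟩
    have hσ0 : 0 ≤ σ := by rw [hσ]; positivity
    have hσ' : 8 * δ * ((i : ℝ) + 1) = σ + 8 * δ := by rw [hσ]; ring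
    rw [hσ'] at hik ⊢
    rw [← hσ] at ih
    have hδ0 : 0 ≤ δ * (pos b - pos a) := by positivity
    rcases segments htrans hmono hpos hp hgap (A (i + 1)) h σ (δ * (pos b - pos a)) hσ0 hδ0
      (ih (by omega)) j a ha b hb hab (by nlinarith) with
      h1 | ⟨l, r, hal, hlr, hrb, h1, h2, ⟨z, hz, h3⟩, ⟨z', hz', h4⟩⟩
    · exact Or.inl (hmono _ _ _ _ _ _ h1 (by omega) (by nlinarith))
    have hl := hpos hal
    have hr := hpos hrb
    have hlr' := hpos hlr
    have hσl : 0 ≤ σ * (pos r - pos l) := mul_nonneg hσ0 (by linarith)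
    have hσl' : 0 ≤ σ * (pos l - pos a) := mul_nonneg hσ0 (by linarith)
    have hσr' : 0 ≤ σ * (pos b - pos r) := mul_nonneg hσ0 (by linarith)
    have hσδ : (σ + 8 * δ) * (pos b - pos a) ≤ 1 * (pos b - pos a) :=
      mul_le_mul_of_nonneg_right hik h0
    have hzz := htrans _ _ _ _ _ _ _ (hsymm _ _ _ _ h3)
      (htrans _ _ _ _ _ _ _ (hp l r hlr) h4)
    rcases hlevel (i + 1) hi z hz z' hz' _ _ hzz with h5 | ⟨⟨y, hy, h5⟩, ⟨y', hy', h6⟩⟩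
    · left
      refine hmono _ _ _ _ _ _ (htrans _ _ _ _ _ _ _ h1 (htrans _ _ _ _ _ _ _ h3
        (htrans _ _ _ _ _ _ _ h5 (htrans _ _ _ _ _ _ _ (hsymm _ _ _ _ h4) h2))))
        (by omega) (by linarith)
    · right
      refine ⟨⟨y, hy, hmono _ _ _ _ _ _ (htrans _ _ _ _ _ _ _ h1
          (htrans _ _ _ _ _ _ _ h3 h5)) (by omega) (by linarith)⟩,
        ⟨y', hy', hmono _ _ _ _ _ _ (htrans _ _ _ _ _ _ _ (hsymm _ _ _ _ h2)
          (htrans _ _ _ _ _ _ _ h4 h6)) (by omega) (by linarith)⟩⟩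

/-- If every window of `D` consecutive path vertices contains a good one and the top level is
empty, the whole path has a `(1 + ε)`-approximation with few hops. -/
lemma path_approx
    (htrans : ∀ x y z h h' L L', W x y h L → W y z h' L' → W x z (h + h') (L + L'))
    (hsymm : ∀ x y h L, W x y h L → W y x h L)
    (hmono : ∀ x y h h' L L', W x y h L → h ≤ h' → L ≤ L' → W x y h' L')
    (hpos : Monotone pos) (hp : ∀ a b, a ≤ b → W (p a) (p b) (b - a) (pos b - pos a))
    (m : ℕ) (hwin : ∀ i, i + D ≤ m + 1 → ∃ a, i ≤ a ∧ a < i + D ∧ p a ∈ S)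
    (hD : 1 ≤ D) (A : ℕ → Set V) (hA : S = A 0) (k : ℕ) (hk : 1 ≤ k)
    (hAk : A (k + 1) = ∅)
    (hlevel : ∀ i ≤ k, ∀ x ∈ A i, ∀ y ∈ A i, ∀ h L, W x y h L → W x y 1 L ∨
      ((∃ z ∈ A (i + 1), W x z 1 L) ∧ (∃ z ∈ A (i + 1), W y z 1 L)))
    (ε : ℝ) (hε : 0 < ε) (hε1 : ε < 1) (j : ℕ) (hj : 1 ≤ (j + 1) * (ε / (8 * k))) :
    W (p 0) (p m) (D * (4 * (j + 1) + 3) ^ k + 2 * D) ((1 + ε) * (pos m - pos 0)) := by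
  subst hA
  have hk0 : (0 : ℝ) < k := by exact_mod_cast hk
  have hpm := hpos (Nat.zero_le m)
  by_cases hm : m + 1 < D
  · exact hmono _ _ _ _ _ _ (hp 0 m (Nat.zero_le m)) (by omega) (by nlinarith)
  have hgap : ∀ a ∈ {a | a ≤ m ∧ p a ∈ A 0}, ∀ b ∈ {a | a ≤ m ∧ p a ∈ A 0}, a < b →
      ∃ c ∈ {a | a ≤ m ∧ p a ∈ A 0}, a < c ∧ c ≤ b ∧ c ≤ a + D := by
    intro a ha b hb hab
    by_cases hbD : b ≤ a + D
    · exact ⟨b, hb, hab, le_rfl, hbD⟩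
    · obtain ⟨c, h1, h2, h3⟩ := hwin (a + 1) (by have := hb.1; omega)
      exact ⟨c, ⟨by have := hb.1; omega, h3⟩, by omega, by omega, by omega⟩
  obtain ⟨a, -, haD, ha⟩ := hwin 0 (by omega)
  obtain ⟨b, hab, hbm, hbD, hb⟩ : ∃ b, a ≤ b ∧ b ≤ m ∧ m ≤ b + D ∧ p b ∈ A 0 := by
    by_cases haD' : a + D ≤ m
    · obtain ⟨b, h1, h2, h3⟩ := hwin (m + 1 - D) (by omega)
      exact ⟨b, by omega, by omega, by omega, h3⟩
    · exact ⟨a, le_rfl, by omega, by omega, ha⟩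
  have hstretch : 8 * (ε / (8 * (k : ℝ))) * k = ε := by field_simp
  rcases level_analysis htrans hsymm hmono hpos hp hgap hD A (fun a ha => ha.2) k hlevel
    (ε / (8 * k)) (by positivity) (by linarith) j hj k le_rfl a ⟨by omega, ha⟩ b ⟨hbm, hb⟩ hab with
    h1 | ⟨⟨z, hz, -⟩, -⟩
  · rw [hstretch] at h1
    have h2 := hpos (Nat.zero_le a)
    have h3 := hpos hbm
    refine hmono _ _ _ _ _ _ (htrans _ _ _ _ _ _ _ (hp 0 a (Nat.zero_le a))
      (htrans _ _ _ _ _ _ _ h1 (hp b m hbm))) (by omega) (by nlinarith)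
  · rw [hAk] at hz; exact absurd hz (Set.notMem_empty z)

end Core

end Hopsets

namespace Hopsets

/-! ### Level sizes and assembly -/

/-- Target size of the `i`-th level: `M ^ (1 - (2 ^ i - 1) / (2 ^ (k + 1) - 1)) / 2 ^ i`. The
factor `2 ^ (-i)` makes the edge counts of the levels decay geometrically. -/
noncomputable def levelSize (M : ℝ) (k i : ℕ) : ℝ :=
  M ^ (1 - (2 ^ i - 1) / (2 ^ (k + 1) - 1 : ℝ)) / 2 ^ i

lemma levelSize_pos {M : ℝ} (hM : 1 ≤ M) (k i : ℕ) : 0 < levelSize M k i := by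
  have : 0 < M := by linarith
  unfold levelSize; positivity

lemma levelSize_zero (M : ℝ) (k : ℕ) : levelSize M k 0 = M := by simp [levelSize]

lemma two_pow_sub_one_pos (k : ℕ) : (0 : ℝ) < 2 ^ (k + 1) - 1 := by
  have : (1 : ℝ) < 2 ^ (k + 1) := one_lt_pow₀ (by norm_num) (by omega)
  linarith

lemma levelSize_top (M : ℝ) (k : ℕ) : levelSize M k (k + 1) ≤ 1 := by
  have h := two_pow_sub_one_pos k
  rw [levelSize, div_self h.ne', sub_self, Real.rpow_zero]
  rw [div_le_one (by positivity)]
  linarith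

lemma levelSize_succ_le {M : ℝ} (hM : 1 ≤ M) (k i : ℕ) :
    levelSize M k (i + 1) ≤ levelSize M k i := by
  have h := two_pow_sub_one_pos k
  have hp : (2 : ℝ) ^ i ≤ 2 ^ (i + 1) := pow_le_pow_right₀ (by norm_num) (by omega)
  have : 0 < M := by linarith
  unfold levelSize
  gcongr

/-- The sizes are chosen so that `levelSize i ^ 2 / levelSize (i + 1)`, which bounds the edge count
of level `i` up to a constant, equals `2 ^ (1 - i) * M ^ (1 + 1 / (2 ^ (k + 1) - 1))`. -/
lemma levelSize_sq {M : ℝ} (hM : 1 ≤ M) (k i : ℕ) :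
    levelSize M k i ^ 2 =
      2 * (1 / 2) ^ i * M ^ (1 + 1 / (2 ^ (k + 1) - 1 : ℝ)) * levelSize M k (i + 1) := by
  have h := two_pow_sub_one_pos k
  have hM0 : 0 < M := by linarith
  unfold levelSize
  rw [div_pow, ← Real.rpow_natCast (M ^ _) 2, ← Real.rpow_mul hM0.le]
  have e : M ^ (1 + 1 / (2 ^ (k + 1) - 1 : ℝ)) *
      M ^ (1 - (2 ^ (i + 1) - 1) / (2 ^ (k + 1) - 1 : ℝ)) =
      M ^ ((1 - (2 ^ i - 1) / (2 ^ (k + 1) - 1 : ℝ)) * ((2 : ℕ) : ℝ)) := by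
    rw [← Real.rpow_add hM0]
    congr 1
    push_cast
    field_simp
    ring
  rw [← e, one_div_pow (2 : ℝ) i, pow_succ (2 : ℝ) i]
  field_simp

/-- The levels `A 0 = S, …, A (k + 1) = ∅` and their edge sets, of total size
`O(M ^ (1 + 1 / (2 ^ (k + 1) - 1)))`. -/
lemma exists_levels [DecidableEq V] (d : V → V → ℝ≥0∞) (hd : ∀ x y, d x y = d y x) (S : Finset V)
    (M : ℝ) (hM : 1 ≤ M) (hS : (S.card : ℝ) ≤ M) (k : ℕ) :
    ∃ (A : ℕ → Finset V) (E : ℕ → Finset (V × V)), A 0 = S ∧ A (k + 1) = ∅ ∧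
      (∀ i x y, (x, y) ∈ E i → d x y ≠ ⊤) ∧ (∀ i x y, (x, y) ∈ E i → (y, x) ∈ E i) ∧
      (∀ i, ∀ x ∈ A i, ∀ y ∈ A i, d x y ≠ ⊤ → (x, y) ∈ E i ∨
        ((∃ z ∈ A (i + 1), (x, z) ∈ E i ∧ d x z ≤ d x y) ∧
          (∃ z ∈ A (i + 1), (y, z) ∈ E i ∧ d y z ≤ d x y))) ∧
      ∑ i ∈ Finset.range (k + 1), ((E i).card : ℝ) ≤
        24 * M ^ (1 + 1 / (2 ^ (k + 1) - 1 : ℝ)) := by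
  choose next E hcard hEcard hfin hsymm hlev using exists_level d hd
  -- `t i < levelSize ≤ t i + 1`, and `t` vanishes at the top level
  let t : ℕ → ℕ := fun i => ⌈levelSize M k i⌉₊ - 1
  let A : ℕ → Finset V := fun i => Nat.rec S (fun i B => next B (t (i + 1))) i
  have hAs : ∀ i, A (i + 1) = next (A i) (t (i + 1)) := fun _ => rfl
  have hceil : ∀ i, 1 ≤ ⌈levelSize M k i⌉₊ := fun i =>
    Nat.one_le_iff_ne_zero.2 (Nat.ceil_pos.2 (levelSize_pos hM k i)).ne'
  have ht1 : ∀ i, levelSize M k i ≤ (t i : ℝ) + 1 := by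
    intro i
    have := Nat.le_ceil (levelSize M k i)
    simp only [t]
    rw [Nat.cast_sub (hceil i)]
    push_cast; linarith
  have ht2 : ∀ i, (t i : ℝ) ≤ levelSize M k i := by
    intro i
    have := Nat.ceil_lt_add_one (levelSize_pos hM k i).le
    simp only [t]
    rw [Nat.cast_sub (hceil i)]
    push_cast; linarith
  have htop : t (k + 1) = 0 := by
    have : ⌈levelSize M k (k + 1)⌉₊ ≤ 1 := Nat.ceil_le.2 (by simpa using levelSize_top M k)
    simp only [t]; omega
  have hAcard : ∀ i, ((A i).card : ℝ) ≤ levelSize M k i := by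
    intro i
    cases i with
    | zero => rw [levelSize_zero]; exact hS
    | succ i =>
      have : ((A (i + 1)).card : ℝ) ≤ t (i + 1) := by
        rw [hAs]; exact_mod_cast hcard (A i) (t (i + 1))
      exact this.trans (ht2 _)
  refine ⟨A, fun i => E (A i) (t (i + 1)), rfl, ?_, fun i => hfin _ _, fun i => hsymm _ _,
    fun i => hlev _ _, ?_⟩
  · rw [hAs, ← Finset.card_eq_zero]
    have := hcard (A k) (t (k + 1))
    omega
  · have hE : ∀ i, ((E (A i) (t (i + 1))).card : ℝ) ≤
        12 * M ^ (1 + 1 / (2 ^ (k + 1) - 1 : ℝ)) * (1 / 2) ^ i := by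
      intro i
      have hx := levelSize_pos hM k (i + 1)
      set C : ℝ := 2 * (1 / 2) ^ i * M ^ (1 + 1 / (2 ^ (k + 1) - 1 : ℝ)) with hC
      have hsq : levelSize M k i ^ 2 = C * levelSize M k (i + 1) := levelSize_sq hM k i
      have h1 : 2 * ((A i).card : ℝ) ^ 2 / ((t (i + 1) : ℝ) + 1) ≤ 2 * C := by
        rw [div_le_iff₀ (by positivity)]
        have h2 : ((A i).card : ℝ) ^ 2 ≤ levelSize M k i ^ 2 := by
          gcongr; exact hAcard i
        have h3 : C * levelSize M k (i + 1) ≤ C * ((t (i + 1) : ℝ) + 1) := by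
          have : 0 ≤ C := by rw [hC]; positivity
          exact mul_le_mul_of_nonneg_left (ht1 (i + 1)) this
        linarith
      have h4 : ((A i).card : ℝ) ≤ C := by
        refine (hAcard i).trans ?_
        have h5 := levelSize_succ_le hM k i
        have h6 := levelSize_pos hM k i
        have h7 : levelSize M k i * levelSize M k (i + 1) ≤ C * levelSize M k (i + 1) := by
          rw [← hsq, sq]; exact mul_le_mul_of_nonneg_left h5 h6.le
        exact le_of_mul_le_mul_right h7 hx
      have := hEcard (A i) (t (i + 1))
      rw [hC] at h1 h4
      linarith
    refine (Finset.sum_le_sum fun i _ => hE i).trans ?_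
    rw [← Finset.mul_sum]
    have hgeo : ∑ i ∈ Finset.range (k + 1), (1 / 2 : ℝ) ^ i ≤ 2 := sum_geometric_two_le _
    have hM0 : 0 ≤ M ^ (1 + 1 / (2 ^ (k + 1) - 1 : ℝ)) := Real.rpow_nonneg (by linarith) _
    nlinarith

/-- A set of size `O(n log n / D)` meeting every `D` consecutive vertices of one fixed simple
walk for each pair of vertices satisfying `P`. -/
lemma exists_path_hitting {n : ℕ} (path : Fin n → Fin n → List (Fin n × Fin n))
    (P : Fin n → Fin n → Prop) (hpath : ∀ u v, P u v → SimpleWalk u (path u v))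
    (D : ℕ) (hD : 1 ≤ D) (hΛ : 1 ≤ (n : ℝ) * Real.log n / D) :
    ∃ S : Finset (Fin n), (S.card : ℝ) ≤ 4 * ((n : ℝ) * Real.log n / D) ∧
      ∀ u v, P u v → ∀ i, i + D ≤ (path u v).length + 1 →
        ∃ a, i ≤ a ∧ a < i + D ∧ vert u (path u v) a ∈ S := by
  classical
  have hD0 : (0 : ℝ) < D := by exact_mod_cast hD
  have hn : 0 < n := by
    rcases Nat.eq_zero_or_pos n with rfl | h
    · norm_num at hΛ
    · exact h
  have hn0 : (0 : ℝ) < n := by exact_mod_cast hn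
  let U : Finset (Fin n × Fin n × Fin n) := Finset.univ.filter fun x =>
    P x.1 x.2.1 ∧ x.2.2 + D ≤ (path x.1 x.2.1).length + 1
  let F : Fin n × Fin n × Fin n → Finset (Fin n) := fun x =>
    (Finset.Ico (x.2.2 : ℕ) (x.2.2 + D)).image (vert x.1 (path x.1 x.2.1))
  have hF : ∀ x ∈ U, D ≤ (F x).card := by
    intro x hx
    obtain ⟨-, hx1, hx2⟩ := Finset.mem_filter.1 hx
    rw [Finset.card_image_of_injOn]
    · simp
    · refine (hpath _ _ hx1).mono fun a ha => ?_
      simp only [Finset.coe_Ico, Set.mem_Ico, Set.mem_Iic] at ha ⊢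
      omega
  set Λ : ℝ := (n : ℝ) * Real.log n / D with hΛdef
  have hU : (U.card : ℝ) ≤ (n : ℝ) ^ 3 := by
    have : U.card ≤ n * (n * n) := by
      refine (Finset.card_le_univ U).trans ?_
      simp
    calc (U.card : ℝ) ≤ ((n * (n * n) : ℕ) : ℝ) := by exact_mod_cast this
      _ = _ := by push_cast; ring
  have hlt : 3 * Real.log n < ((⌊3 * Λ⌋₊ + 1 : ℕ) : ℝ) * D / n := by
    have h1 := Nat.lt_floor_add_one (3 * Λ)
    have h2 : 3 * Real.log n = 3 * Λ * D / n := by rw [hΛdef]; field_simp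
    rw [h2]
    push_cast
    gcongr
  have ht : (U.card : ℝ) * Real.exp (-(((⌊3 * Λ⌋₊ + 1 : ℕ) : ℝ) * D / n)) < 1 := by
    calc _ ≤ (n : ℝ) ^ 3 * Real.exp (-(((⌊3 * Λ⌋₊ + 1 : ℕ) : ℝ) * D / n)) := by gcongr
      _ < (n : ℝ) ^ 3 * Real.exp (-(3 * Real.log n)) := by gcongr
      _ = 1 := by
        have : Real.exp (3 * Real.log n) = (n : ℝ) ^ 3 := by
          rw [show (3 : ℝ) * Real.log n = ((3 : ℕ) : ℝ) * Real.log n by norm_num,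
            Real.exp_nat_mul, Real.exp_log hn0]
        rw [Real.exp_neg, this]
        field_simp
  obtain ⟨S, hS, hhit⟩ := exists_hitting D U F hF _ ht
  refine ⟨S, ?_, ?_⟩
  · have h1 := Nat.floor_le (show 0 ≤ 3 * Λ by linarith)
    have h2 : (S.card : ℝ) ≤ ((⌊3 * Λ⌋₊ + 1 : ℕ) : ℝ) := by exact_mod_cast hS
    push_cast at h2
    linarith
  · intro u v huv i hi
    have hlen := (hpath u v huv).length_lt
    obtain ⟨x, hx, hxS⟩ := hhit (u, v, ⟨i, by omega⟩)
      (Finset.mem_filter.2 ⟨Finset.mem_univ _, huv, hi⟩)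
    obtain ⟨a, ha, rfl⟩ := Finset.mem_image.1 hx
    rw [Finset.mem_Ico] at ha
    exact ⟨a, ha.1, ha.2, hxS⟩

/-- The construction in the main range `n log n ≥ D`, with explicit size and hopbound;
`j + 1` is the number of pieces a walk is cut into at each level. -/
lemma exists_hopset {n : ℕ} {G : WDigraph (Fin n)} (hs : G.Symmetric) (hG : G.Nonneg) {ε : ℝ}
    (hε : 0 < ε) (hε1 : ε < 1) {k D : ℕ} (hk : 1 ≤ k) (hD : 1 ≤ D)
    (hΛ : 1 ≤ (n : ℝ) * Real.log n / D) (j : ℕ) (hj : 1 ≤ (j + 1) * (ε / (8 * k))) :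
    ∃ H : Finset (Fin n × Fin n), IsHopset G (D * (4 * (j + 1) + 3) ^ k + 2 * D) ε H ∧
      (H.card : ℝ) ≤
        24 * (4 * ((n : ℝ) * Real.log n / D)) ^ (1 + 1 / (2 ^ (k + 1) - 1 : ℝ)) := by
  have hex : ∀ u v, ∃ l, G.dist u v ≠ ⊤ → IsWalkFrom G u v l ∧ SimpleWalk u l ∧
      ENNReal.ofReal (wsum G l) = G.dist u v := by
    intro u v
    by_cases h : G.dist u v = ⊤
    · exact ⟨[], fun h' => absurd h h'⟩
    · obtain ⟨l, hl⟩ := exists_shortest hG h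
      exact ⟨l, fun _ => hl⟩
  choose path hpath using hex
  obtain ⟨S, hS, hwin⟩ := exists_path_hitting path (fun u v => G.dist u v ≠ ⊤)
    (fun u v h => (hpath u v h).2.1) D hD hΛ
  obtain ⟨A, E, hA0, hAk, hfin, hsymm, hlev, hcard⟩ := exists_levels G.dist (dist_symm hG hs) S
    _ (by linarith) hS k
  set H : Finset (Fin n × Fin n) := (Finset.range (k + 1)).biUnion E with hH
  have hEH : ∀ i ≤ k, ∀ {e}, e ∈ E i → e ∈ H := fun i hi e he =>
    Finset.mem_biUnion.2 ⟨i, Finset.mem_range.2 (by omega), he⟩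
  have hHfin : ∀ x y, (x, y) ∈ H → G.dist x y ≠ ⊤ := by
    intro x y h
    obtain ⟨i, -, hi⟩ := Finset.mem_biUnion.1 h
    exact hfin i x y hi
  have hHsymm : ∀ x y, (x, y) ∈ H → (y, x) ∈ H := by
    intro x y h
    obtain ⟨i, hi, hi'⟩ := Finset.mem_biUnion.1 h
    exact Finset.mem_biUnion.2 ⟨i, hi, hsymm i x y hi'⟩
  refine ⟨H, isHopset_of_hopWalk hG hHfin hε fun u v huv => ?_, ?_⟩
  · obtain ⟨hw, -, hsum⟩ := hpath u v huv
    have hdist : (G.dist u v).toReal = wsum G (path u v) := by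
      rw [← hsum, ENNReal.toReal_ofReal (wsum_nonneg hG _)]
    have key := path_approx (W := HopWalk G H) (D := D) (p := vert u (path u v))
      (pos := fun i => wsum G ((path u v).take i)) (S := (S : Set (Fin n)))
      (fun x y z h h' L L' => HopWalk.trans) (fun x y h L => HopWalk.symm hG hs hHsymm)
      (fun x y h h' L L' => HopWalk.mono)
      (fun a b hab => by
        have := wsum_nonneg hG (((path u v).drop a).take (b - a))
        rw [wsum_seg G _ a b hab] at this
        linarith)
      (fun a b hab => by
        have := HopWalk.of_walk (H := H) hG (walk_seg hw a b hab)
        rw [wsum_seg G _ a b hab] at this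
        exact this.mono (List.length_take_le _ _) le_rfl)
      (path u v).length (fun i hi => by simpa using hwin u v huv i hi) hD
      (fun i => (A i : Set (Fin n))) (by simp [hA0]) k hk (by simp [hAk])
      (fun i hi x hx y hy h L hxy => by
        have hL := hxy.nonneg hG
        have hd := hxy.dist_le hG hHfin
        rcases hlev i x hx y hy (ne_top_of_le_ne_top ENNReal.ofReal_ne_top hd) with
          h1 | ⟨⟨z, hz, h1, h2⟩, z', hz', h3, h4⟩
        · exact Or.inl (HopWalk.of_mem (hEH i hi h1) hL hd)
        · exact Or.inr ⟨⟨z, hz, HopWalk.of_mem (hEH i hi h1) hL (h2.trans hd)⟩,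
            ⟨z', hz', HopWalk.of_mem (hEH i hi h3) hL (h4.trans hd)⟩⟩)
      ε hε hε1 j hj
    simpa [vert_zero, vert_length hw, wsum_nil, hdist] using key
  · refine le_trans ?_ hcard
    exact_mod_cast Finset.card_biUnion_le

/-- When `n log n < D` no added edge is needed: simple shortest walks already have fewer than
`n` edges. -/
lemma isHopset_empty {n : ℕ} {G : WDigraph (Fin n)} (hG : G.Nonneg) {ε : ℝ} (hε : 0 < ε) :
    IsHopset G n ε ∅ := by
  refine isHopset_of_hopWalk hG (by simp) hε fun u v huv => ?_
  obtain ⟨l, hl, hsl, hsum⟩ := exists_shortest hG huv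
  refine (HopWalk.of_walk hG hl).mono hsl.length_lt.le ?_
  rw [← hsum, ENNReal.toReal_ofReal (wsum_nonneg hG _)]
  nlinarith [wsum_nonneg hG l]

lemma le_two_mul_of_small {n D : ℕ} (hD : 1 ≤ D) (h : (n : ℝ) * Real.log n / D < 1) :
    (n : ℝ) ≤ 2 * D := by
  have hD1 : (1 : ℝ) ≤ D := by exact_mod_cast hD
  rcases Nat.lt_or_ge n 2 with hn | hn
  · have : (n : ℝ) ≤ 1 := by exact_mod_cast Nat.lt_succ_iff.1 hn
    linarith
  · rw [div_lt_one (by linarith)] at h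
    have h2 : (2 : ℝ) ≤ n := by exact_mod_cast hn
    have h3 : Real.log 2 ≤ Real.log n := Real.log_le_log (by norm_num) h2
    have h4 := Real.log_two_gt_d9
    nlinarith

end Hopsets

open Hopsets in
/-- There is a constant `c ≥ 1` such that every `n`-vertex undirected
graph with nonnegative polynomially bounded weights admits, for every `ε ∈ (0,1)`
and integers `k, D ≥ 1`, a `(β,ε)`-hopset `H` with `β ≤ (c·k/ε)^k·D` and
`|H| ≤ c·(n·log n / D)^{1+1/(2^{k+1}−1)}`. -/
theorem stmt_8 (q : ℕ) :
    ∃ c : ℝ, 1 ≤ c ∧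
      ∀ n : ℕ, ∀ G : WDigraph (Fin n), G.Symmetric → G.Nonneg → G.PolyBounded q →
      ∀ ε : ℝ, ε ∈ Set.Ioo (0 : ℝ) 1 → ∀ k D : ℕ, 1 ≤ k → 1 ≤ D →
        ∃ (β : ℕ) (H : Finset (Fin n × Fin n)),
          IsHopset G β ε H ∧
          (β : ℝ) ≤ (c * (k : ℝ) / ε) ^ k * (D : ℝ) ∧
          (H.card : ℝ) ≤
            c * ((n : ℝ) * Real.log n / (D : ℝ)) ^ (1 + 1 / (2 ^ (k + 1) - 1 : ℝ)) := by
  refine ⟨384, by norm_num, fun n G hs hG _ ε hε k D hk hD => ?_⟩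
  obtain ⟨hε0, hε1⟩ := hε
  have hD0 : (1 : ℝ) ≤ D := by exact_mod_cast hD
  have hk1 : (1 : ℝ) ≤ k := by exact_mod_cast hk
  have hkε : 1 ≤ (k : ℝ) / ε := by rw [le_div_iff₀ hε0]; linarith
  have hexp0 := two_pow_sub_one_pos k
  rcases lt_or_ge ((n : ℝ) * Real.log n / D) 1 with hΛ | hΛ
  · refine ⟨n, ∅, isHopset_empty hG hε0, ?_, ?_⟩
    · have h1 : (2 : ℝ) ≤ 384 * k / ε := by rw [mul_div_assoc]; linarith
      have h2 : (2 : ℝ) ≤ (384 * k / ε) ^ k :=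
        h1.trans (le_self_pow₀ (by linarith) (by omega))
      have := le_two_mul_of_small hD hΛ
      nlinarith
    · have h0 : 0 ≤ (n : ℝ) * Real.log n / D :=
        div_nonneg (mul_nonneg (Nat.cast_nonneg n) (Real.log_natCast_nonneg n)) (by linarith)
      have := Real.rpow_nonneg h0 (1 + 1 / (2 ^ (k + 1) - 1 : ℝ))
      simp only [Finset.card_empty, Nat.cast_zero]
      positivity
  · -- the path is cut into `j + 1 = ⌈8k/ε⌉` pieces at every level
    have hpos : 0 < 8 * ((k : ℝ) / ε) := by linarith
    obtain ⟨j, hj⟩ : ∃ j, ⌈8 * ((k : ℝ) / ε)⌉₊ = j + 1 :=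
      Nat.exists_eq_add_one_of_ne_zero (Nat.ceil_pos.2 hpos).ne'
    have hj1 : 8 * ((k : ℝ) / ε) ≤ (j : ℝ) + 1 := by
      have := Nat.le_ceil (8 * ((k : ℝ) / ε)); rw [hj] at this; exact_mod_cast this
    have hj2 : (j : ℝ) + 1 < 8 * ((k : ℝ) / ε) + 1 := by
      have := Nat.ceil_lt_add_one hpos.le; rw [hj] at this; exact_mod_cast this
    have hj3 : 1 ≤ ((j : ℝ) + 1) * (ε / (8 * k)) := by
      have h8 : 8 * ((k : ℝ) / ε) * (ε / (8 * k)) = 1 := by field_simp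
      calc (1 : ℝ) = 8 * ((k : ℝ) / ε) * (ε / (8 * k)) := h8.symm
        _ ≤ _ := by gcongr
    obtain ⟨H, hH, hcard⟩ := exists_hopset hs hG hε0 hε1 hk hD hΛ j hj3
    refine ⟨_, H, hH, ?_, hcard.trans ?_⟩
    · have hQ : 3 * (4 * ((j : ℝ) + 1) + 3) ≤ 384 * k / ε := by rw [mul_div_assoc]; linarith
      have hQ0 : (1 : ℝ) ≤ (4 * ((j : ℝ) + 1) + 3) ^ k :=
        one_le_pow₀ (by have : (0 : ℝ) ≤ j := Nat.cast_nonneg j; linarith)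
      have h3 : (3 : ℝ) ≤ 3 ^ k := le_self_pow₀ (by norm_num) (by omega)
      have h4 : 3 * (4 * ((j : ℝ) + 1) + 3) ^ k ≤ (384 * k / ε) ^ k := by
        calc 3 * (4 * ((j : ℝ) + 1) + 3) ^ k ≤ 3 ^ k * (4 * ((j : ℝ) + 1) + 3) ^ k := by gcongr
          _ = (3 * (4 * ((j : ℝ) + 1) + 3)) ^ k := by rw [mul_pow]
          _ ≤ _ := by gcongr
      push_cast
      nlinarith
    · rw [Real.mul_rpow (by norm_num) (by linarith)]
      have h4 : (4 : ℝ) ^ (1 + 1 / (2 ^ (k + 1) - 1 : ℝ)) ≤ 16 := by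
        have h2 : (2 : ℝ) ≤ 2 ^ (k + 1) := le_self_pow₀ (by norm_num) (by omega)
        have h1 : 1 / (2 ^ (k + 1) - 1 : ℝ) ≤ 1 := by
          rw [div_le_one hexp0]; linarith
        calc (4 : ℝ) ^ (1 + 1 / (2 ^ (k + 1) - 1 : ℝ)) ≤ 4 ^ (2 : ℝ) :=
              Real.rpow_le_rpow_of_exponent_le (by norm_num) (by linarith)
          _ = 16 := by norm_num
      have h0 := Real.rpow_nonneg (zero_le_one.trans hΛ) (1 + 1 / (2 ^ (k + 1) - 1 : ℝ))
      nlinarith
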